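/- One has lim_{m→∞} Π_m{ n ≤ p_m^2 } = lim_{m→∞} Σ_{n∈Ω_m, n≤p_m^2} π_m(n) = e^{−γ}·(3 − ln 4) ≈ 0.90603; i.e., asymptotically about 90% of the mass of Π_m is carried by the integers in Ω_m not exceeding p_m². -/

import Mathlib

open Filter
open scoped Topology

noncomputable section

/-- The `j`-th prime number, `0`-indexed: `nthPrime 0 = 2`, `nthPrime 1 = 3`, … -/
def nthPrime (j : ℕ) : ℕ := Nat.nth Nat.Prime j

/-- The partition function `Z_m = ∏_{j=1}^m (1 + 1/p_j)`. -/
def Zm (m : ℕ) : ℝ := ∏ j ∈ Finset.range m, (1 + 1 / (nthPrime j : ℝ))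

/-- The element `n = ∏_{j=1}^m p_j^{ν_j}` of `Ω_m` parametrized by `ν ∈ {0,1}^m`. -/
def elt (m : ℕ) (ν : Fin m → Bool) : ℕ := ∏ j : Fin m, if ν j then nthPrime j else 1

/-- The mass `π_m(n) = 1/(Z_m n)`. -/
def mass (m : ℕ) (ν : Fin m → Bool) : ℝ := 1 / (Zm m * (elt m ν : ℝ))

/-!
An integer `n ≤ x ^ 2` has at most one prime factor exceeding `x`. Hence the squarefree `n ≤ x ^ 2`
free of primes above `x` contribute to `∑ 1 / n` what all squarefree `n ≤ x ^ 2` contribute, less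
one term for each prime `p` between `x` and `x ^ 2`. As `∑ 1 / n` over squarefree `n ≤ N` is
`6 / π ^ 2 * log N + O(1)`, Mertens' first two theorems evaluate the difference asymptotically as
`6 / π ^ 2 * (2 - (2 * log 2 - 1)) * log x`.

The partition function is `exp γ * 6 / π ^ 2 * log x` asymptotically, by Mertens' third theorem.
Its constant is found by an Abelian argument: as `σ → 0⁺`, the sum `∑ p ^ (-1 - σ)` over the primes,
known from the Euler product, is compared with `∑ exp (-σ * n) / n = -log (1 - exp (-σ))`, and `γ`
enters through the harmonic numbers.
-/

open Real (log exp)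

/-! ### Mertens' first theorem -/

lemma log_factorial_eq_sum_primesLE (N : ℕ) :
    log N.factorial = ∑ p ∈ Nat.primesLE N, N.factorial.factorization p * log p := by
  rw [Real.log_nat_eq_sum_factorization]
  refine Finsupp.sum_of_support_subset _ (fun p hp ↦ ?_) _ (by simp)
  have hp' := Nat.prime_of_mem_primeFactors hp
  exact Nat.mem_primesLE.2 ⟨hp'.dvd_factorial.1 (Nat.dvd_of_mem_primeFactors hp), hp'⟩

lemma mul_log_sub_le_log_factorial (N : ℕ) : N * log N - N ≤ log N.factorial := by
  rcases eq_or_ne N 0 with rfl | hN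
  · simp
  have hlog : 0 ≤ log N := Real.log_natCast_nonneg N
  have hpi : 0 ≤ log (2 * Real.pi) := Real.log_nonneg (by linarith [Real.pi_gt_three])
  linarith [Stirling.le_log_factorial_stirling hN]

lemma log_factorial_le_mul_log (N : ℕ) : log N.factorial ≤ N * log N := by
  rw [← Real.log_pow]
  exact Real.log_le_log (by positivity) (mod_cast Nat.factorial_le_pow N)

lemma div_le_factorization_factorial_add_one {p : ℕ} (hp : p.Prime) (N : ℕ) :
    (N : ℝ) / p ≤ N.factorial.factorization p + 1 := by
  have hdiv : N / p ≤ N.factorial.factorization p :=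
    calc N / p ≤ (p * (N / p)).factorial.factorization p := by
          rw [Nat.factorization_factorial_mul hp]; exact Nat.le_add_left _ _
      _ ≤ N.factorial.factorization p :=
          (Nat.factorization_le_iff_dvd (Nat.factorial_ne_zero _) (Nat.factorial_ne_zero _)).2
            (Nat.factorial_dvd_factorial (Nat.mul_div_le N p)) p
  rw [div_le_iff₀ (mod_cast hp.pos)]
  exact_mod_cast (Nat.lt_mul_div_succ N hp.pos).le.trans (by rw [mul_comm]; gcongr)

lemma factorization_factorial_le {p : ℕ} (hp : p.Prime) (N : ℕ) :
    (N.factorial.factorization p : ℝ) ≤ N * (1 / p + 2 / p ^ 2) := by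
  have hp2 : (2 : ℝ) ≤ p := mod_cast hp.two_le
  calc (N.factorial.factorization p : ℝ) ≤ (N / (p - 1) : ℕ) :=
        mod_cast Nat.factorization_factorial_le_div_pred hp N
    _ ≤ N / ((p - 1 : ℕ) : ℝ) := Nat.cast_div_le
    _ = N * (1 / (p - 1)) := by rw [Nat.cast_pred hp.pos, mul_one_div]
    _ ≤ N * (1 / p + 2 / p ^ 2) := by
        gcongr
        rw [div_add_div _ _ (by positivity) (by positivity), div_le_div_iff₀ (by linarith)
          (by positivity)]
        nlinarith

lemma summable_log_div_sq : Summable fun n : ℕ ↦ log n / (n : ℝ) ^ 2 := by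
  have hs : Summable fun n : ℕ ↦ 2 * ((n : ℝ) ^ (3 / 2 : ℝ))⁻¹ :=
    (Real.summable_nat_rpow_inv.2 (by norm_num)).mul_left 2
  refine hs.of_nonneg_of_le (fun n ↦ by positivity) fun n ↦ ?_
  rcases n.eq_zero_or_pos with rfl | hn
  · simp
  have hn' : (0 : ℝ) < n := mod_cast hn
  have hsq : (n : ℝ) ^ 2 = (n : ℝ) ^ (3 / 2 : ℝ) * (n : ℝ) ^ (1 / 2 : ℝ) := by
    rw [← Real.rpow_add hn', ← Real.rpow_natCast]; norm_num
  rw [hsq, div_le_iff₀ (by positivity)]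
  calc log n ≤ (n : ℝ) ^ (1 / 2 : ℝ) / (1 / 2) := Real.log_le_rpow_div hn'.le (by norm_num)
    _ = _ := by field_simp

lemma sum_primesLE_log_div_le {N : ℕ} (hN : 1 ≤ N) :
    ∑ p ∈ Nat.primesLE N, log p / p ≤ log N + log 4 := by
  have hN' : (0 : ℝ) < N := mod_cast hN
  refine le_of_mul_le_mul_left ?_ hN'
  calc N * ∑ p ∈ Nat.primesLE N, log p / p = ∑ p ∈ Nat.primesLE N, (N : ℝ) / p * log p := by
        rw [Finset.mul_sum]; exact Finset.sum_congr rfl fun p _ ↦ by ring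
    _ ≤ ∑ p ∈ Nat.primesLE N, ((N.factorial.factorization p : ℝ) + 1) * log p := by
        gcongr with p hp
        exact div_le_factorization_factorial_add_one (Nat.prime_of_mem_primesLE hp) N
    _ = log N.factorial + Chebyshev.theta N := by
        rw [log_factorial_eq_sum_primesLE, Chebyshev.theta_eq_sum_primesLE_log,
          ← Finset.sum_add_distrib]
        exact Finset.sum_congr rfl fun p _ ↦ by ring
    _ ≤ N * log N + log 4 * N :=
        add_le_add (log_factorial_le_mul_log N) (Chebyshev.theta_le_log4_mul_x hN'.le)
    _ = N * (log N + log 4) := by ring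

lemma log_le_sum_primesLE_log_div {N : ℕ} (hN : 1 ≤ N) :
    log N ≤ ∑ p ∈ Nat.primesLE N, log p / p + (1 + 2 * ∑' n : ℕ, log n / (n : ℝ) ^ 2) := by
  have hN' : (0 : ℝ) < N := mod_cast hN
  suffices N * (log N - 1) ≤
      N * (∑ p ∈ Nat.primesLE N, log p / p + 2 * ∑' n : ℕ, log n / (n : ℝ) ^ 2) by
    linarith [le_of_mul_le_mul_left this hN']
  calc N * (log N - 1) = N * log N - N := by ring
    _ ≤ ∑ p ∈ Nat.primesLE N, N.factorial.factorization p * log p :=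
        log_factorial_eq_sum_primesLE N ▸ mul_log_sub_le_log_factorial N
    _ ≤ ∑ p ∈ Nat.primesLE N, N * (1 / p + 2 / p ^ 2) * log p := by
        gcongr with p hp
        exact factorization_factorial_le (Nat.prime_of_mem_primesLE hp) N
    _ = N * (∑ p ∈ Nat.primesLE N, log p / p +
          2 * ∑ p ∈ Nat.primesLE N, log p / (p : ℝ) ^ 2) := by
        rw [Finset.mul_sum, ← Finset.sum_add_distrib, Finset.mul_sum]
        exact Finset.sum_congr rfl fun p _ ↦ by ring
    _ ≤ _ := by
        gcongr
        exact summable_log_div_sq.sum_le_tsum _ fun n _ ↦ by positivity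

theorem exists_abs_sum_primesLE_log_div_sub_log_le :
    ∃ K, ∀ N : ℕ, 1 ≤ N → |∑ p ∈ Nat.primesLE N, log p / p - log N| ≤ K := by
  set T := ∑' n : ℕ, log n / (n : ℝ) ^ 2
  refine ⟨max (log 4) (1 + 2 * T), fun N hN ↦ abs_le.2 ⟨?_, ?_⟩⟩
  · linarith [log_le_sum_primesLE_log_div hN, le_max_right (log 4) (1 + 2 * T)]
  · linarith [sum_primesLE_log_div_le hN, le_max_left (log 4) (1 + 2 * T)]

/-! ### Mertens' second theorem -/

lemma abs_sub_div_sub_log_sub_log_le {a b : ℝ} (ha : 0 < a) (hab : a ≤ b) :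
    |(b - a) / b - (log b - log a)| ≤ (b - a) * (a⁻¹ - b⁻¹) := by
  have hb : 0 < b := ha.trans_le hab
  have hupper : log (b / a) ≤ b / a - 1 := Real.log_le_sub_one_of_pos (div_pos hb ha)
  have hlower : 1 - (b / a)⁻¹ ≤ log (b / a) := Real.one_sub_inv_le_log_of_pos (div_pos hb ha)
  have hdiv : (b - a) / b = 1 - (b / a)⁻¹ := by field_simp
  have hgap : (b - a) * (a⁻¹ - b⁻¹) = b / a - 1 - (1 - (b / a)⁻¹) := by field_simp
  rw [← Real.log_div hb.ne' ha.ne', hdiv, hgap, abs_le]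
  constructor <;> linarith

lemma summable_sub_div_sub_log_sub_log_of_monotone {a : ℕ → ℝ} (hmono : Monotone a)
    (hpos : ∀ n, 0 < a n) (hstep : ∀ n, a (n + 1) - a n ≤ 1) :
    Summable fun n ↦ (a (n + 1) - a n) / a (n + 1) - (log (a (n + 1)) - log (a n)) := by
  have hinv (n : ℕ) : 0 ≤ (a n)⁻¹ - (a (n + 1))⁻¹ :=
    sub_nonneg.2 (inv_anti₀ (hpos n) (hmono n.le_succ))
  have htele : Summable fun n ↦ (a n)⁻¹ - (a (n + 1))⁻¹ := by
    refine summable_of_sum_range_le hinv (c := (a 0)⁻¹) fun n ↦ ?_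
    rw [Finset.sum_range_sub']
    exact sub_le_self _ (inv_nonneg.2 (hpos n).le)
  refine Summable.of_norm_bounded htele fun n ↦ ?_
  exact (abs_sub_div_sub_log_sub_log_le (hpos n) (hmono n.le_succ)).trans
    (mul_le_of_le_one_left (hinv n) (hstep n))

lemma summable_log_sub_log_div_log_sub_log_log_sub_log_log :
    Summable fun i : ℕ ↦ (log (i + 3 : ℕ) - log (i + 2 : ℕ)) / log (i + 3 : ℕ) -
      (log (log (i + 3 : ℕ)) - log (log (i + 2 : ℕ))) := by
  refine summable_sub_div_sub_log_sub_log_of_monotone (a := fun i ↦ log (i + 2 : ℕ))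
    (fun i j hij ↦ Real.log_le_log (by positivity) (by gcongr))
    (fun i ↦ Real.log_pos (by norm_cast; lia)) fun i ↦ ?_
  rw [← Real.log_div (by positivity) (by positivity)]
  refine (Real.log_le_sub_one_of_pos (by positivity)).trans ?_
  rw [sub_le_iff_le_add, div_le_iff₀ (by positivity)]
  norm_cast
  lia

lemma tendsto_log_natCast_atTop : Tendsto (fun x : ℕ ↦ log x) atTop atTop :=
  Real.tendsto_log_atTop.comp tendsto_natCast_atTop_atTop

-- Writing `R` for the bounded difference, `c n` is `(R n - R (n - 1)) / log n`, which is summable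
-- by Dirichlet's test, plus `(log n - log (n - 1)) / log n`, nearly the increment of `log log`.
theorem exists_tendsto_sum_sub_log_log {c : ℕ → ℝ} {K : ℝ}
    (hc : ∀ N : ℕ, 1 ≤ N → |∑ n ∈ Finset.range (N + 1), c n * log n - log N| ≤ K) :
    ∃ M, Tendsto (fun N : ℕ ↦ ∑ n ∈ Finset.range (N + 1), c n - log (log N)) atTop (𝓝 M) := by
  set R : ℕ → ℝ := fun N ↦ ∑ n ∈ Finset.range (N + 1), c n * log n - log N
  have hlog (i : ℕ) : 0 < log (i + 3 : ℕ) := Real.log_pos (by norm_cast; lia)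
  have hanti : Antitone fun i : ℕ ↦ (log (i + 3 : ℕ))⁻¹ := fun i j hij ↦
    inv_anti₀ (hlog i) (by gcongr)
  have hzero : Tendsto (fun i : ℕ ↦ (log (i + 3 : ℕ))⁻¹) atTop (𝓝 0) :=
    tendsto_inv_atTop_zero.comp (tendsto_log_natCast_atTop.comp (tendsto_add_atTop_nat 3))
  have hbound (n : ℕ) : ‖∑ i ∈ Finset.range n, (R (i + 3) - R (i + 2))‖ ≤ K + K := by
    rw [Finset.sum_range_sub (fun i ↦ R (i + 2))]
    exact (norm_sub_le _ _).trans (add_le_add (hc _ (by lia)) (hc _ (by lia)))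
  obtain ⟨S, hS⟩ := cauchySeq_tendsto_of_complete
    (hanti.cauchySeq_series_mul_of_tendsto_zero_of_bounded hzero hbound)
  have hsum := hS.add summable_log_sub_log_div_log_sub_log_log_sub_log_log.hasSum.tendsto_sum_nat
  set F : ℕ → ℝ := fun k ↦ ∑ n ∈ Finset.range (k + 2 + 1), c n - log (log (k + 2 : ℕ))
  have hterm (i : ℕ) : (log (i + 3 : ℕ))⁻¹ • (R (i + 3) - R (i + 2)) +
      ((log (i + 3 : ℕ) - log (i + 2 : ℕ)) / log (i + 3 : ℕ) -
        (log (log (i + 3 : ℕ)) - log (log (i + 2 : ℕ)))) = F (i + 1) - F i := by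
    have := (hlog i).ne'
    simp only [R, F, Finset.sum_range_succ _ (i + 2 + 1), smul_eq_mul]
    field_simp
    ring
  refine ⟨_, (tendsto_add_atTop_iff_nat 2).1 <| (hsum.const_add (F 0)).congr fun k ↦ ?_⟩
  rw [← Finset.sum_add_distrib, Finset.sum_congr rfl fun i _ ↦ hterm i, Finset.sum_range_sub]
  exact add_sub_cancel _ _

theorem exists_tendsto_sum_primesLE_inv_sub_log_log :
    ∃ M, Tendsto (fun N : ℕ ↦ ∑ p ∈ Nat.primesLE N, (p : ℝ)⁻¹ - log (log N)) atTop (𝓝 M) := by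
  obtain ⟨K, hK⟩ := exists_abs_sum_primesLE_log_div_sub_log_le
  simp only [Nat.primesLE_eq_filter_range, Finset.sum_filter] at hK ⊢
  refine exists_tendsto_sum_sub_log_log (K := K) fun N hN ↦ ?_
  simpa only [ite_mul, zero_mul, inv_mul_eq_div] using hK N hN

/-! ### An Abelian theorem for exponential sums -/

section Abelian

open MeasureTheory Set

lemma integrableOn_ite_mul_exp_neg (c t : ℝ) :
    IntegrableOn (fun w ↦ (if t ≤ w then c else 0) * exp (-w)) (Ioi 0) := by
  simp only [ite_mul, zero_mul]
  exact ((integrableOn_exp_neg_Ioi 0).const_mul c).indicator (s := Ici t) measurableSet_Ici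

lemma integral_Ioi_ite_mul_exp_neg (c : ℝ) {t : ℝ} (ht : 0 ≤ t) :
    ∫ w in Ioi 0, (if t ≤ w then c else 0) * exp (-w) = c * exp (-t) := by
  simp only [ite_mul, zero_mul]
  have hind : (fun w ↦ if t ≤ w then c * exp (-w) else 0) =
      (Ici t).indicator fun w ↦ c * exp (-w) := rfl
  rw [hind, setIntegral_indicator measurableSet_Ici, setIntegral_congr_set (t := Ioi t),
    integral_const_mul, integral_exp_neg_Ioi]
  rw [← max_eq_right ht, ← Ioi_inter_Ioi, max_eq_right ht]
  exact (ae_eq_refl _).inter Ioi_ae_eq_Ici.symm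

variable {ι : Type*} [Countable ι] {a t : ι → ℝ} {S : ℝ → ℝ}

lemma hasSum_mul_exp_neg (ht : ∀ i, 0 ≤ t i) (ha : Summable fun i ↦ |a i| * exp (-t i))
    (hS : ∀ w, 0 < w → HasSum (fun i ↦ if t i ≤ w then a i else 0) (S w)) :
    HasSum (fun i ↦ a i * exp (-t i)) (∫ w in Ioi 0, S w * exp (-w)) := by
  have hsum := hasSum_integral_of_summable_integral_norm
    (fun i ↦ integrableOn_ite_mul_exp_neg (a i) (t i)) <| by
      simp only [norm_mul, apply_ite norm, norm_zero, Real.norm_eq_abs, Real.abs_exp]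
      simpa only [integral_Ioi_ite_mul_exp_neg _ (ht _)] using ha
  simp only [integral_Ioi_ite_mul_exp_neg _ (ht _)] at hsum
  rwa [setIntegral_congr_fun measurableSet_Ioi fun w hw ↦ ((hS w hw).mul_right _).tsum_eq] at hsum

lemma tendsto_integral_comp_div_mul_exp_neg {C L : ℝ} (hmeas : Measurable S)
    (hbound : ∀ v, 0 < v → |S v| ≤ C) (hlim : Tendsto S atTop (𝓝 L)) :
    Tendsto (fun σ ↦ ∫ w in Ioi 0, S (w / σ) * exp (-w)) (𝓝[>] 0) (𝓝 L) := by
  have hL : ∫ w in Ioi 0, L * exp (-w) = L := by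
    rw [integral_const_mul, integral_exp_neg_Ioi_zero, mul_one]
  rw [← hL]
  refine tendsto_integral_filter_of_dominated_convergence (fun w ↦ C * exp (-w))
    (.of_forall fun σ ↦ by fun_prop) ?_ ((integrableOn_exp_neg_Ioi 0).const_mul C) ?_
  · filter_upwards [self_mem_nhdsWithin] with σ hσ
    filter_upwards [ae_restrict_mem measurableSet_Ioi] with w hw
    rw [norm_mul, Real.norm_eq_abs, Real.norm_eq_abs, Real.abs_exp]
    gcongr
    exact hbound _ (div_pos hw hσ)
  · filter_upwards [ae_restrict_mem measurableSet_Ioi] with w hw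
    exact (hlim.comp (tendsto_inv_nhdsGT_zero.const_mul_atTop hw)).mul_const _

theorem tendsto_tsum_mul_exp_neg_mul {C L : ℝ} (ht : ∀ i, 0 ≤ t i)
    (ha : ∀ σ, 0 < σ → Summable fun i ↦ |a i| * exp (-(σ * t i)))
    (hS : ∀ v, 0 < v → HasSum (fun i ↦ if t i ≤ v then a i else 0) (S v))
    (hmeas : Measurable S) (hbound : ∀ v, 0 < v → |S v| ≤ C) (hlim : Tendsto S atTop (𝓝 L)) :
    Tendsto (fun σ ↦ ∑' i, a i * exp (-(σ * t i))) (𝓝[>] 0) (𝓝 L) := by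
  refine (tendsto_integral_comp_div_mul_exp_neg hmeas hbound hlim).congr' ?_
  filter_upwards [self_mem_nhdsWithin] with σ (hσ : 0 < σ)
  refine (hasSum_mul_exp_neg (fun i ↦ mul_nonneg hσ.le (ht i)) (ha σ hσ) fun w hw ↦ ?_).tsum_eq.symm
  simpa only [le_div_iff₀' hσ] using hS (w / σ) (div_pos hw hσ)

end Abelian

/-! ### The Euler product -/

/-- The completely multiplicative function `n ↦ n ^ (-s)`, whose sum is `ζ(s)`. -/
def invRpowHom {s : ℝ} (hs : s ≠ 0) : ℕ →*₀ ℝ where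
  toFun n := ((n : ℝ) ^ s)⁻¹
  map_zero' := by simp [hs]
  map_one' := by simp
  map_mul' m n := by
    rw [Nat.cast_mul, Real.mul_rpow m.cast_nonneg n.cast_nonneg, mul_inv]

lemma hasSum_primes_neg_log_one_sub {f : ℕ →*₀ ℝ} (hf : Summable f) (hnonneg : ∀ n, 0 ≤ f n)
    (hlt : ∀ p, p.Prime → f p < 1) :
    HasSum (fun p : Nat.Primes ↦ -log (1 - f p)) (log (∑' n, f n)) := by
  have hprod := EulerProduct.eulerProduct_completely_multiplicative_hasProd (f := f) hf.norm
  have hpos : 0 < ∑' n, f n := hf.tsum_pos hnonneg 1 (by simp)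
  refine ((Real.continuousAt_log hpos.ne').tendsto.comp hprod).congr fun s ↦ ?_
  rw [Function.comp_apply, Real.log_prod fun (p : Nat.Primes) _ ↦
    inv_ne_zero (sub_pos.2 (hlt p p.2)).ne']
  simp only [Real.log_inv]

lemma inv_prime_rpow_le_inv {p : ℕ} (hp : p.Prime) {s : ℝ} (hs : 1 ≤ s) :
    ((p : ℝ) ^ s)⁻¹ ≤ (p : ℝ)⁻¹ :=
  inv_anti₀ (mod_cast hp.pos) (Real.self_le_rpow_of_one_le (mod_cast hp.one_le) hs)

lemma inv_prime_le_half {p : ℕ} (hp : p.Prime) : (p : ℝ)⁻¹ ≤ 1 / 2 :=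
  (inv_anti₀ two_pos (mod_cast hp.two_le)).trans_eq (one_div 2).symm

theorem hasSum_primes_neg_log_one_sub_inv_rpow {s : ℝ} (hs : 1 < s) :
    HasSum (fun p : Nat.Primes ↦ -log (1 - ((p : ℝ) ^ s)⁻¹)) (log (∑' n : ℕ, ((n : ℝ) ^ s)⁻¹)) :=
  hasSum_primes_neg_log_one_sub (f := invRpowHom (by positivity))
    (Real.summable_nat_rpow_inv.2 hs) (fun n ↦ inv_nonneg.2 (Real.rpow_nonneg n.cast_nonneg s))
    fun p hp ↦ ((inv_prime_rpow_le_inv hp hs.le).trans (inv_prime_le_half hp)).trans_lt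
      one_half_lt_one

/-- The remainder `-log (1 - y) - y = y ^ 2 / 2 + y ^ 3 / 3 + ⋯` of the logarithm of an Euler
factor `(1 - y)⁻¹` beyond first order. -/
def logRemainder (y : ℝ) : ℝ := -log (1 - y) - y

lemma logRemainder_nonneg {y : ℝ} (hy : y < 1) : 0 ≤ logRemainder y := by
  unfold logRemainder
  linarith [Real.log_le_sub_one_of_pos (sub_pos.2 hy)]

lemma logRemainder_le {y : ℝ} (hy : y ≤ 1 / 2) : logRemainder y ≤ 2 * y ^ 2 := by
  have hpos : 0 < 1 - y := by linarith
  calc logRemainder y ≤ -(1 - (1 - y)⁻¹) - y := by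
        unfold logRemainder
        gcongr
        exact Real.one_sub_inv_le_log_of_pos hpos
    _ = y ^ 2 / (1 - y) := by field_simp; ring
    _ ≤ 2 * y ^ 2 := by
        rw [div_le_iff₀ hpos]
        nlinarith [sq_nonneg y]

lemma summable_primes_inv_sq : Summable fun p : Nat.Primes ↦ (p : ℝ)⁻¹ ^ 2 := by
  simpa using Nat.Primes.summable_rpow.2 (show (-2 : ℝ) < -1 by norm_num)

lemma norm_logRemainder_le {p : ℕ} (hp : p.Prime) {y : ℝ} (hy : 0 ≤ y) (hyp : y ≤ (p : ℝ)⁻¹) :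
    ‖logRemainder y‖ ≤ 2 * (p : ℝ)⁻¹ ^ 2 := by
  have hhalf : y ≤ 1 / 2 := hyp.trans (inv_prime_le_half hp)
  rw [Real.norm_of_nonneg (logRemainder_nonneg (by linarith))]
  exact (logRemainder_le hhalf).trans (by gcongr)

lemma summable_logRemainder_inv : Summable fun p : Nat.Primes ↦ logRemainder (p : ℝ)⁻¹ :=
  (summable_primes_inv_sq.mul_left 2).of_norm_bounded fun p ↦
    norm_logRemainder_le p.2 (by positivity) le_rfl

lemma tendsto_tsum_logRemainder :
    Tendsto (fun σ : ℝ ↦ ∑' p : Nat.Primes, logRemainder ((p : ℝ) ^ (1 + σ))⁻¹) (𝓝[>] 0)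
      (𝓝 (∑' p : Nat.Primes, logRemainder (p : ℝ)⁻¹)) := by
  refine tendsto_tsum_of_dominated_convergence (summable_primes_inv_sq.mul_left 2) (fun p ↦ ?_) ?_
  · have hp0 : (p : ℝ) ≠ 0 := mod_cast p.2.ne_zero
    have hne : 1 - (p : ℝ)⁻¹ ≠ 0 := by linarith [inv_prime_le_half p.2]
    have hcont : ContinuousAt (fun σ : ℝ ↦ logRemainder ((p : ℝ) ^ (1 + σ))⁻¹) 0 := by
      unfold logRemainder
      fun_prop (disch := simp [hp0, hne])
    simpa using hcont.tendsto.mono_left nhdsWithin_le_nhds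
  · filter_upwards [self_mem_nhdsWithin] with σ (hσ : 0 < σ) p
    exact norm_logRemainder_le p.2 (by positivity) (inv_prime_rpow_le_inv p.2 (by linarith))

lemma tendsto_log_sub_log_of_tendsto_div {α : Type*} {l : Filter α} {f g : α → ℝ}
    (h : Tendsto (fun x ↦ f x / g x) l (𝓝 1)) :
    Tendsto (fun x ↦ log (f x) - log (g x)) l (𝓝 0) := by
  rw [← Real.log_one]
  refine (h.log one_ne_zero).congr' ?_
  filter_upwards [h.eventually_ne one_ne_zero] with x hx
  rw [div_ne_zero_iff] at hx
  exact Real.log_div hx.1 hx.2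

lemma tendsto_log_tsum_inv_rpow_add_log :
    Tendsto (fun σ : ℝ ↦ log (∑' n : ℕ, ((n : ℝ) ^ (1 + σ))⁻¹) + log σ) (𝓝[>] 0) (𝓝 0) := by
  have hshift : Tendsto (fun σ : ℝ ↦ 1 + σ) (𝓝[>] 0) (𝓝[>] 1) := by
    simpa using (continuous_const_add (1 : ℝ)).continuousWithinAt.tendsto_nhdsWithin
      (x := 0) (s := Set.Ioi 0) (t := Set.Ioi 1) fun σ hσ ↦ by simpa using hσ
  have hres := tendsto_sub_mul_tsum_nat_rpow.comp hshift
  simpa only [Real.log_inv, sub_neg_eq_add] using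
    tendsto_log_sub_log_of_tendsto_div (f := fun σ : ℝ ↦ ∑' n : ℕ, ((n : ℝ) ^ (1 + σ))⁻¹)
      (g := fun σ ↦ σ⁻¹) (hres.congr fun σ ↦ by simp [mul_comm])

lemma tendsto_log_one_sub_exp_neg_sub_log :
    Tendsto (fun σ : ℝ ↦ log (1 - exp (-σ)) - log σ) (𝓝[>] 0) (𝓝 0) := by
  refine tendsto_log_sub_log_of_tendsto_div ?_
  have hderiv : HasDerivAt (fun σ : ℝ ↦ 1 - exp (-σ)) 1 0 := by
    simpa using ((hasDerivAt_neg (0 : ℝ)).exp).const_sub 1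
  simpa [slope_fun_def_field] using hderiv.tendsto_slope.mono_left (nhdsGT_le_nhdsNE 0)

lemma summable_primes_inv_rpow {s : ℝ} (hs : 1 < s) :
    Summable fun p : Nat.Primes ↦ ((p : ℝ) ^ s)⁻¹ := by
  simpa only [Real.rpow_neg (Nat.cast_nonneg _)] using
    Nat.Primes.summable_rpow.2 (neg_lt_neg hs)

-- With `y = p ^ (-1 - σ)` the Euler factor is `-log (1 - y) = y + logRemainder y`.
lemma tendsto_tsum_primes_inv_rpow_add_log :
    Tendsto (fun σ : ℝ ↦ ∑' p : Nat.Primes, ((p : ℝ) ^ (1 + σ))⁻¹ + log (1 - exp (-σ))) (𝓝[>] 0)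
      (𝓝 (-∑' p : Nat.Primes, logRemainder (p : ℝ)⁻¹)) := by
  have hlim := (tendsto_log_tsum_inv_rpow_add_log.add tendsto_log_one_sub_exp_neg_sub_log).sub
    tendsto_tsum_logRemainder
  rw [add_zero, zero_sub] at hlim
  refine hlim.congr' ?_
  filter_upwards [self_mem_nhdsWithin] with σ (hσ : 0 < σ)
  have hs : 1 < 1 + σ := by linarith
  have hrem := ((hasSum_primes_neg_log_one_sub_inv_rpow hs).sub
    (summable_primes_inv_rpow hs).hasSum).tsum_eq
  simp only [logRemainder, hrem]
  ring

/-! ### Mertens' third theorem -/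

lemma exists_abs_sub_le_of_monotone {f g : ℝ → ℝ} {L : ℝ} (hf : Monotone f) (hg : Monotone g)
    (h : Tendsto (fun v ↦ f v - g v) atTop (𝓝 L)) : ∃ C, ∀ v, 0 < v → |f v - g v| ≤ C := by
  obtain ⟨V, hV⟩ := eventually_atTop.1 (h.abs.eventually_le_const (lt_add_one |L|))
  refine ⟨max (|L| + 1) (max |f 0| |f V| + max |g 0| |g V|), fun v hv ↦ ?_⟩
  rcases le_total V v with hVv | hvV
  · exact le_max_of_le_left (hV v hVv)
  · exact le_max_of_le_right ((abs_sub _ _).trans (add_le_add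
      (abs_le_max_abs_abs (hf hv.le) (hf hvV)) (abs_le_max_abs_abs (hg hv.le) (hg hvV))))

lemma monotone_sum_primesLE_floor_exp :
    Monotone fun v : ℝ ↦ ∑ p ∈ Nat.primesLE ⌊exp v⌋₊, (p : ℝ)⁻¹ := fun v w hvw ↦
  Finset.sum_le_sum_of_subset_of_nonneg (Nat.primesLE_mono (by gcongr)) fun p _ _ ↦ by positivity

lemma monotone_harmonic_floor : Monotone fun v : ℝ ↦ (harmonic ⌊v⌋₊ : ℝ) := fun v w hvw ↦ by
  simp only [harmonic]
  gcongr

lemma tendsto_harmonic_floor_sub_log :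
    Tendsto (fun v : ℝ ↦ (harmonic ⌊v⌋₊ : ℝ) - log v) atTop
      (𝓝 Real.eulerMascheroniConstant) := by
  have hfloor := tendsto_log_sub_log_of_tendsto_div (tendsto_nat_floor_div_atTop (R := ℝ))
  simpa using (Real.tendsto_harmonic_sub_log.comp tendsto_nat_floor_atTop).add hfloor

lemma tendsto_log_log_floor_exp_sub_log :
    Tendsto (fun v : ℝ ↦ log (log ⌊exp v⌋₊) - log v) atTop (𝓝 0) := by
  have hfloor : Tendsto (fun v : ℝ ↦ log ⌊exp v⌋₊ - v) atTop (𝓝 0) := by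
    simpa [Function.comp_def] using
      (tendsto_log_sub_log_of_tendsto_div (tendsto_nat_floor_div_atTop (R := ℝ))).comp
        Real.tendsto_exp_atTop
  refine tendsto_log_sub_log_of_tendsto_div ?_
  have hdiv : Tendsto (fun v : ℝ ↦ (log ⌊exp v⌋₊ - v) / v + 1) atTop (𝓝 (0 + 1)) :=
    (hfloor.div_atTop tendsto_id).add_const 1
  rw [zero_add] at hdiv
  refine hdiv.congr' ?_
  filter_upwards [eventually_ne_atTop 0] with v hv
  field_simp
  ring

lemma tendsto_sum_primesLE_floor_exp_sub_log {M : ℝ}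
    (hM : Tendsto (fun N : ℕ ↦ ∑ p ∈ Nat.primesLE N, (p : ℝ)⁻¹ - log (log N)) atTop (𝓝 M)) :
    Tendsto (fun v : ℝ ↦ ∑ p ∈ Nat.primesLE ⌊exp v⌋₊, (p : ℝ)⁻¹ - log v) atTop (𝓝 M) := by
  simpa using (hM.comp (tendsto_nat_floor_atTop.comp Real.tendsto_exp_atTop)).add
    tendsto_log_log_floor_exp_sub_log

lemma hasSum_primes_ite_le (f : ℕ → ℝ) (N : ℕ) :
    HasSum (fun p : Nat.Primes ↦ if (p : ℕ) ≤ N then f p else 0) (∑ p ∈ Nat.primesLE N, f p) := by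
  have hsum : HasSum (fun p : {p : ℕ // p.Prime} ↦ if (p : ℕ) ≤ N then f p else 0) _ :=
    hasSum_sum_of_ne_finset_zero (s := (Nat.primesLE N).subtype Nat.Prime) fun p hp ↦
      if_neg fun hle ↦ hp (Finset.mem_subtype.2 (Nat.mem_primesLE.2 ⟨hle, p.2⟩))
  rwa [Finset.sum_subtype_of_mem (fun p ↦ if p ≤ N then f p else 0)
    fun _ ↦ Nat.prime_of_mem_primesLE, Finset.sum_congr rfl fun p hp ↦
      if_pos (Nat.le_of_mem_primesLE hp)] at hsum

lemma hasSum_primes_ite_log_le (f : ℕ → ℝ) (v : ℝ) :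
    HasSum (fun p : Nat.Primes ↦ if log p ≤ v then f p else 0)
      (∑ p ∈ Nat.primesLE ⌊exp v⌋₊, f p) := by
  have hiff (p : Nat.Primes) : log p ≤ v ↔ (p : ℕ) ≤ ⌊exp v⌋₊ := by
    rw [Real.log_le_iff_le_exp (Nat.cast_pos.2 p.2.pos), Nat.le_floor_iff (Real.exp_pos v).le]
  simpa only [hiff] using hasSum_primes_ite_le f ⌊exp v⌋₊

lemma hasSum_ite_succ_le (v : ℝ) :
    HasSum (fun n : ℕ ↦ if (n + 1 : ℝ) ≤ v then -((n : ℝ) + 1)⁻¹ else 0)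
      (-(harmonic ⌊v⌋₊ : ℝ)) := by
  have hlt (n : ℕ) : n ∈ Finset.range ⌊v⌋₊ ↔ (n + 1 : ℝ) ≤ v := by
    rw [Finset.mem_range, ← Nat.add_one_le_iff, Nat.le_floor_iff' n.succ_ne_zero, Nat.cast_add_one]
  have hsum : HasSum (fun n : ℕ ↦ if (n + 1 : ℝ) ≤ v then -((n : ℝ) + 1)⁻¹ else 0) _ :=
    hasSum_sum_of_ne_finset_zero (s := Finset.range ⌊v⌋₊) fun n hn ↦ if_neg (mt (hlt n).2 hn)
  rw [Finset.sum_congr rfl fun n hn ↦ if_pos ((hlt n).1 hn)] at hsum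
  simpa [harmonic] using hsum

lemma hasSum_inv_succ_mul_exp_neg {σ : ℝ} (hσ : 0 < σ) :
    HasSum (fun n : ℕ ↦ -((n : ℝ) + 1)⁻¹ * exp (-(σ * (n + 1)))) (log (1 - exp (-σ))) := by
  have hlt : |exp (-σ)| < 1 := by simpa [Real.abs_exp] using hσ
  simpa [← Real.exp_nat_mul, div_eq_inv_mul, mul_comm σ] using
    (Real.hasSum_pow_div_log_of_abs_lt_one hlt).neg

lemma inv_mul_exp_neg_mul_log {x : ℝ} (hx : 0 < x) (σ : ℝ) :
    x⁻¹ * exp (-(σ * log x)) = (x ^ (1 + σ))⁻¹ := by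
  rw [Real.rpow_add hx, Real.rpow_one, mul_inv, Real.rpow_def_of_pos hx, ← Real.exp_neg,
    mul_comm (log x)]

-- The Abelian theorem is applied to the primes and the positive integers at once, with opposite
-- signs, at the points `log p` and `n`: both counting functions grow like `log v`.
lemma tendsto_tsum_primes_inv_rpow_add_log_of_tendsto {M : ℝ}
    (hM : Tendsto (fun N : ℕ ↦ ∑ p ∈ Nat.primesLE N, (p : ℝ)⁻¹ - log (log N)) atTop (𝓝 M)) :
    Tendsto (fun σ : ℝ ↦ ∑' p : Nat.Primes, ((p : ℝ) ^ (1 + σ))⁻¹ + log (1 - exp (-σ))) (𝓝[>] 0)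
      (𝓝 (M - Real.eulerMascheroniConstant)) := by
  have hlim := (tendsto_sum_primesLE_floor_exp_sub_log hM).sub tendsto_harmonic_floor_sub_log
  simp only [sub_sub_sub_cancel_right] at hlim
  obtain ⟨C, hC⟩ := exists_abs_sub_le_of_monotone monotone_sum_primesLE_floor_exp
    monotone_harmonic_floor hlim
  let a : Nat.Primes ⊕ ℕ → ℝ := Sum.elim (fun p ↦ (p : ℝ)⁻¹) fun n ↦ -((n : ℝ) + 1)⁻¹
  let t : Nat.Primes ⊕ ℕ → ℝ := Sum.elim (fun p ↦ log p) fun n ↦ n + 1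
  have hsum (σ : ℝ) (hσ : 0 < σ) : HasSum (fun i ↦ a i * exp (-(σ * t i)))
      (∑' p : Nat.Primes, ((p : ℝ) ^ (1 + σ))⁻¹ + log (1 - exp (-σ))) := by
    refine HasSum.sum ?_ (hasSum_inv_succ_mul_exp_neg hσ)
    convert (summable_primes_inv_rpow (by linarith : 1 < 1 + σ)).hasSum using 2 with p
    exact inv_mul_exp_neg_mul_log (Nat.cast_pos.2 p.2.pos) σ
  refine (tendsto_tsum_mul_exp_neg_mul (a := a) (t := t) ?_ (fun σ hσ ↦ ?_) (fun v _ ↦ ?_) ?_ hC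
    hlim).congr' ?_
  · rintro (p | n)
    · exact Real.log_natCast_nonneg p
    · exact n.cast_add_one_pos.le
  · simpa [abs_mul] using (hsum σ hσ).summable.abs
  · exact HasSum.sum (hasSum_primes_ite_log_le _ v) (hasSum_ite_succ_le v)
  · exact monotone_sum_primesLE_floor_exp.measurable.sub monotone_harmonic_floor.measurable
  · filter_upwards [self_mem_nhdsWithin] with σ hσ
    exact (hsum σ hσ).tsum_eq

lemma tendsto_sum_primesLE_inv_sub_log_log :
    Tendsto (fun N : ℕ ↦ ∑ p ∈ Nat.primesLE N, (p : ℝ)⁻¹ - log (log N)) atTop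
      (𝓝 (Real.eulerMascheroniConstant - ∑' p : Nat.Primes, logRemainder (p : ℝ)⁻¹)) := by
  obtain ⟨M, hM⟩ := exists_tendsto_sum_primesLE_inv_sub_log_log
  have heq := tendsto_nhds_unique (tendsto_tsum_primes_inv_rpow_add_log_of_tendsto hM)
    tendsto_tsum_primes_inv_rpow_add_log
  rwa [show M = Real.eulerMascheroniConstant - ∑' p : Nat.Primes, logRemainder (p : ℝ)⁻¹ by
    linarith] at hM

lemma tendsto_sum_primesLE_of_hasSum {f : ℕ → ℝ} {S : ℝ}
    (hf : HasSum (fun p : Nat.Primes ↦ f p) S) :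
    Tendsto (fun N ↦ ∑ p ∈ Nat.primesLE N, f p) atTop (𝓝 S) := by
  have hexhaust : Tendsto (fun N ↦ (Nat.primesLE N).subtype Nat.Prime) atTop atTop :=
    tendsto_atTop_finset_of_monotone
      (fun _ _ h ↦ Finset.subtype_mono (Nat.primesLE_mono h)) fun p ↦
        ⟨p, Finset.mem_subtype.2 (Nat.mem_primesLE.2 ⟨le_rfl, p.2⟩)⟩
  refine (Tendsto.comp hf hexhaust).congr fun N ↦ ?_
  exact Finset.sum_subtype_of_mem f fun _ ↦ Nat.prime_of_mem_primesLE

lemma log_one_add_inv_prime {p : ℕ} (hp : p.Prime) :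
    log (1 + (p : ℝ)⁻¹) =
      (p : ℝ)⁻¹ + logRemainder (p : ℝ)⁻¹ - -log (1 - ((p : ℝ) ^ (2 : ℝ))⁻¹) := by
  have hpos : 0 < 1 - (p : ℝ)⁻¹ := by linarith [inv_prime_le_half hp]
  have hfactor : 1 - ((p : ℝ) ^ (2 : ℝ))⁻¹ = (1 - (p : ℝ)⁻¹) * (1 + (p : ℝ)⁻¹) := by
    rw [Real.rpow_two]
    ring
  rw [hfactor, Real.log_mul hpos.ne' (by positivity), logRemainder]
  ring

lemma tendsto_sum_primesLE_log_one_add_inv_sub_log_log :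
    Tendsto (fun N : ℕ ↦ ∑ p ∈ Nat.primesLE N, log (1 + (p : ℝ)⁻¹) - log (log N)) atTop
      (𝓝 (Real.eulerMascheroniConstant - log (Real.pi ^ 2 / 6))) := by
  have heuler := hasSum_primes_neg_log_one_sub_inv_rpow one_lt_two
  have hbasel : ∑' n : ℕ, ((n : ℝ) ^ (2 : ℝ))⁻¹ = Real.pi ^ 2 / 6 := by
    simpa using hasSum_zeta_two.tsum_eq
  rw [hbasel] at heuler
  have hlim := (tendsto_sum_primesLE_inv_sub_log_log.add (tendsto_sum_primesLE_of_hasSum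
    (f := fun p ↦ logRemainder (p : ℝ)⁻¹) summable_logRemainder_inv.hasSum)).sub
    (tendsto_sum_primesLE_of_hasSum (f := fun p ↦ -log (1 - ((p : ℝ) ^ (2 : ℝ))⁻¹)) heuler)
  rw [sub_add_cancel] at hlim
  refine hlim.congr fun N ↦ ?_
  rw [Finset.sum_congr rfl fun p hp ↦ log_one_add_inv_prime (Nat.prime_of_mem_primesLE hp),
    Finset.sum_sub_distrib, Finset.sum_add_distrib]
  ring

theorem tendsto_prod_primesLE_one_add_inv_div_log :
    Tendsto (fun N : ℕ ↦ (∏ p ∈ Nat.primesLE N, (1 + (p : ℝ)⁻¹)) / log N) atTop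
      (𝓝 (exp Real.eulerMascheroniConstant * (6 / Real.pi ^ 2))) := by
  have hlim := tendsto_sum_primesLE_log_one_add_inv_sub_log_log.rexp
  rw [Real.exp_sub, Real.exp_log (by positivity), div_eq_mul_inv, inv_div] at hlim
  refine hlim.congr' ?_
  filter_upwards [eventually_gt_atTop 1] with N hN
  rw [Real.exp_sub, Real.exp_log (Real.log_pos (mod_cast hN)),
    ← Real.log_prod fun p _ ↦ by positivity, Real.exp_log (by positivity)]

/-! ### Sums of reciprocals of squarefree numbers -/

/-- The squarefree part of the harmonic sum, `∑ 1 / n` over squarefree `1 ≤ n ≤ N`. -/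
def squarefreeHarmonic (N : ℕ) : ℝ := ∑ n ∈ Finset.Icc 1 N with Squarefree n, (n : ℝ)⁻¹

lemma sum_Icc_filter_dvd {M : Type*} [AddCommMonoid M] {m : ℕ} (hm : 0 < m) (N : ℕ) (f : ℕ → M) :
    ∑ n ∈ Finset.Icc 1 N with m ∣ n, f n = ∑ k ∈ Finset.Icc 1 (N / m), f (m * k) := by
  have himage : {n ∈ Finset.Icc 1 N | m ∣ n} = (Finset.Icc 1 (N / m)).image (m * ·) := by
    ext n
    simp only [Finset.mem_filter, Finset.mem_Icc, Finset.mem_image, Nat.le_div_iff_mul_le hm]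
    constructor
    · rintro ⟨⟨hn, hnN⟩, k, rfl⟩
      exact ⟨k, ⟨Nat.pos_of_mul_pos_left hn, by rwa [mul_comm]⟩, rfl⟩
    · rintro ⟨k, ⟨hk, hkN⟩, rfl⟩
      exact ⟨⟨Nat.mul_pos hm hk, by rwa [mul_comm]⟩, dvd_mul_right m k⟩
  rw [himage, Finset.sum_image (mul_right_injective₀ hm.ne').injOn]

lemma sq_dvd_sq_mul_iff_of_squarefree {a b d : ℕ} (ha : Squarefree a) :
    d ^ 2 ∣ b ^ 2 * a ↔ d ∣ b := by
  refine ⟨fun h ↦ ?_, fun h ↦ (pow_dvd_pow_of_dvd h 2).mul_right a⟩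
  rcases eq_or_ne b 0 with rfl | hb
  · exact dvd_zero d
  have hd : d ≠ 0 := by
    rintro rfl
    simp [hb, ha.ne_zero] at h
  rw [← Nat.factorization_le_iff_dvd (by positivity) (mul_ne_zero (by positivity) ha.ne_zero),
    Nat.factorization_mul (by positivity) ha.ne_zero, Nat.factorization_pow,
    Nat.factorization_pow] at h
  rw [← Nat.factorization_le_iff_dvd hd hb]
  intro q
  have hq : 2 * d.factorization q ≤ 2 * b.factorization q + a.factorization q := h q
  have haq := ha.natFactorization_le_one q
  omega

lemma sum_moebius_filter_sq_dvd {n N : ℕ} (hn : 0 < n) (hnN : n ≤ N) :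
    ∑ d ∈ Finset.Icc 1 N with d ^ 2 ∣ n, ArithmeticFunction.moebius d =
      if Squarefree n then 1 else 0 := by
  obtain ⟨a, b, -, hb, rfl, ha⟩ := Nat.sq_mul_squarefree_of_pos hn
  have hdivisors : {d ∈ Finset.Icc 1 N | d ∣ b} = b.divisors := by
    ext d
    simp only [Finset.mem_filter, Finset.mem_Icc, Nat.mem_divisors]
    refine ⟨fun h ↦ ⟨h.2, hb.ne'⟩, fun h ↦ ⟨⟨Nat.pos_of_dvd_of_pos h.1 hb, ?_⟩, h.1⟩⟩
    calc d ≤ b := Nat.le_of_dvd hb h.1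
      _ ≤ b ^ 2 * a := Nat.le_of_dvd hn (dvd_mul_of_dvd_left (dvd_pow_self b two_ne_zero) a)
      _ ≤ N := hnN
  have hsquarefree : Squarefree (b ^ 2 * a) ↔ b = 1 := by
    refine ⟨fun h ↦ ?_, by rintro rfl; simpa using ha⟩
    exact Nat.isUnit_iff.1 (h b ⟨a, by ring⟩)
  simp only [sq_dvd_sq_mul_iff_of_squarefree ha, hdivisors, hsquarefree]
  rw [← ArithmeticFunction.coe_mul_zeta_apply, ArithmeticFunction.moebius_mul_coe_zeta,
    ArithmeticFunction.one_apply]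

lemma squarefreeHarmonic_eq_sum_moebius (N : ℕ) :
    squarefreeHarmonic N = ∑ d ∈ Finset.Icc 1 N,
      ArithmeticFunction.moebius d * ((d : ℝ) ^ 2)⁻¹ * harmonic (N / d ^ 2) := by
  calc squarefreeHarmonic N
    _ = ∑ n ∈ Finset.Icc 1 N, ∑ d ∈ Finset.Icc 1 N,
          if d ^ 2 ∣ n then ArithmeticFunction.moebius d * (n : ℝ)⁻¹ else 0 := by
        rw [squarefreeHarmonic, Finset.sum_filter]
        refine Finset.sum_congr rfl fun n hn ↦ ?_
        rw [Finset.mem_Icc] at hn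
        rw [← Finset.sum_filter, ← Finset.sum_mul, ← Int.cast_sum,
          sum_moebius_filter_sq_dvd hn.1 hn.2]
        split_ifs <;> simp
    _ = ∑ d ∈ Finset.Icc 1 N, ∑ n ∈ Finset.Icc 1 N with d ^ 2 ∣ n,
          ArithmeticFunction.moebius d * (n : ℝ)⁻¹ := by
        rw [Finset.sum_comm]
        simp only [Finset.sum_filter]
    _ = _ := by
        refine Finset.sum_congr rfl fun d hd ↦ ?_
        rw [sum_Icc_filter_dvd (pow_pos (Finset.mem_Icc.1 hd).1 2), harmonic_eq_sum_Icc]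
        push_cast
        rw [Finset.mul_sum]
        exact Finset.sum_congr rfl fun k _ ↦ by rw [mul_inv, mul_assoc]

lemma abs_harmonic_div_sq_sub_log_le {N d : ℕ} (hN : 1 ≤ N) (hd : 1 ≤ d) :
    |(harmonic (N / d ^ 2) : ℝ) - log N| ≤ 1 + 2 * log d := by
  have hN0 : (0 : ℝ) < N := mod_cast hN
  have hd2 : (0 : ℝ) < (d : ℝ) ^ 2 := mod_cast pow_pos hd 2
  have hlogN : 0 ≤ log N := Real.log_natCast_nonneg N
  have hlogd : 0 ≤ log d := Real.log_natCast_nonneg d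
  rw [abs_le]
  rcases le_or_gt (d ^ 2) N with hle | hlt
  · have hone : (1 : ℝ) ≤ N / d ^ 2 := (one_le_div hd2).2 (mod_cast hle)
    have hlog : log (N / d ^ 2) = log N - 2 * log d := by
      rw [Real.log_div hN0.ne' hd2.ne', Real.log_pow, Nat.cast_two]
    have hfloor : ⌊(N : ℝ) / d ^ 2⌋₊ = N / d ^ 2 := mod_cast Nat.floor_div_eq_div (K := ℝ) N (d ^ 2)
    have hlower := log_le_harmonic_floor _ (zero_le_one.trans hone)
    have hupper := harmonic_floor_le_one_add_log _ hone
    rw [hfloor, hlog] at hlower hupper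
    constructor <;> linarith
  · have hle : log N ≤ 2 * log d := by
      rw [← Nat.cast_two, ← Real.log_pow]
      exact Real.log_le_log hN0 (mod_cast hlt.le)
    rw [Nat.div_eq_of_lt hlt, harmonic_zero, Rat.cast_zero]
    constructor <;> linarith

lemma abs_moebius_mul_inv_sq_le (d : ℕ) :
    |ArithmeticFunction.moebius d * ((d : ℝ) ^ 2)⁻¹| ≤ ((d : ℝ) ^ 2)⁻¹ := by
  rw [abs_mul, abs_of_nonneg (a := ((d : ℝ) ^ 2)⁻¹) (by positivity)]
  exact mul_le_of_le_one_left (by positivity) (mod_cast ArithmeticFunction.abs_moebius_le_one)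

lemma tsum_moebius_mul_inv_sq :
    ∑' d : ℕ, ArithmeticFunction.moebius d * ((d : ℝ) ^ 2)⁻¹ = 6 / Real.pi ^ 2 := by
  have hterm (d : ℕ) : LSeries.term (fun n ↦ (ArithmeticFunction.moebius n : ℂ)) 2 d =
      (ArithmeticFunction.moebius d * ((d : ℝ) ^ 2)⁻¹ : ℝ) := by
    rcases eq_or_ne d 0 with rfl | hd
    · simp
    · simp [LSeries.term_of_ne_zero hd, div_eq_mul_inv]
  have hprod := ArithmeticFunction.LSeries_zeta_mul_Lseries_moebius (s := 2) (by norm_num)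
  rw [ArithmeticFunction.LSeries_zeta_eq_riemannZeta (by norm_num), riemannZeta_two, LSeries,
    tsum_congr hterm, ← Complex.ofReal_tsum] at hprod
  have hreal : Real.pi ^ 2 / 6 * ∑' d : ℕ, ArithmeticFunction.moebius d * ((d : ℝ) ^ 2)⁻¹ = 1 :=
    mod_cast hprod
  rw [eq_inv_of_mul_eq_one_right hreal, inv_div]

lemma hasSum_moebius_mul_inv_sq :
    HasSum (fun d : ℕ ↦ ArithmeticFunction.moebius d * ((d : ℝ) ^ 2)⁻¹) (6 / Real.pi ^ 2) := by
  have hsummable : Summable fun d : ℕ ↦ (ArithmeticFunction.moebius d : ℝ) * ((d : ℝ) ^ 2)⁻¹ :=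
    (Real.summable_nat_pow_inv.2 one_lt_two).of_norm_bounded abs_moebius_mul_inv_sq_le
  exact tsum_moebius_mul_inv_sq ▸ hsummable.hasSum

lemma hasSum_moebius_mul_harmonic (N : ℕ) :
    HasSum (fun d : ℕ ↦ ArithmeticFunction.moebius d * ((d : ℝ) ^ 2)⁻¹ * harmonic (N / d ^ 2))
      (squarefreeHarmonic N) := by
  rw [squarefreeHarmonic_eq_sum_moebius]
  refine hasSum_sum_of_ne_finset_zero fun d hd ↦ ?_
  rcases Nat.eq_zero_or_pos d with rfl | hd0
  · simp
  · rw [Finset.mem_Icc, not_and, not_le] at hd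
    have hlt : N < d ^ 2 := (hd hd0).trans_le (Nat.le_self_pow two_ne_zero d)
    simp [Nat.div_eq_of_lt hlt]

theorem exists_abs_squarefreeHarmonic_sub_log_le :
    ∃ K, ∀ N : ℕ, 1 ≤ N → |squarefreeHarmonic N - 6 / Real.pi ^ 2 * log N| ≤ K := by
  have hbound : Summable fun d : ℕ ↦ ((d : ℝ) ^ 2)⁻¹ * (1 + 2 * log d) :=
    ((Real.summable_nat_pow_inv.2 one_lt_two).add (summable_log_div_sq.mul_left 2)).congr
      fun d ↦ by ring
  refine ⟨∑' d : ℕ, ((d : ℝ) ^ 2)⁻¹ * (1 + 2 * log d), fun N hN ↦ ?_⟩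
  have hdiff := (hasSum_moebius_mul_harmonic N).sub (hasSum_moebius_mul_inv_sq.mul_right (log N))
  rw [← hdiff.tsum_eq, ← Real.norm_eq_abs]
  refine tsum_of_norm_bounded hbound.hasSum fun d ↦ ?_
  rcases Nat.eq_zero_or_pos d with rfl | hd
  · simp
  · rw [← mul_sub, norm_mul]
    exact mul_le_mul (abs_moebius_mul_inv_sq_le d) (abs_harmonic_div_sq_sub_log_le hN hd)
      (norm_nonneg _) (by positivity)

/-! ### Squarefree numbers with a large prime factor -/

/-- The sum `∑ 1 / n` over the squarefree `n ≤ N` all of whose prime factors are less than `k`. -/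
def smoothSquarefreeHarmonic (N k : ℕ) : ℝ :=
  ∑ n ∈ Nat.smoothNumbersUpTo N k with Squarefree n, (n : ℝ)⁻¹

lemma squarefreeHarmonic_eq_smooth_add_rough (N k : ℕ) :
    squarefreeHarmonic N = smoothSquarefreeHarmonic N k +
      ∑ n ∈ Nat.roughNumbersUpTo N k with Squarefree n, (n : ℝ)⁻¹ := by
  have hdisjoint : Disjoint (Nat.smoothNumbersUpTo N k) (Nat.roughNumbersUpTo N k) :=
    Finset.disjoint_filter.2 fun n _ hn h ↦ h.2 hn
  have hunion : Finset.Icc 1 N = Nat.smoothNumbersUpTo N k ∪ Nat.roughNumbersUpTo N k := by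
    ext n
    have hne : n ∈ k.smoothNumbers → n ≠ 0 := Nat.ne_zero_of_mem_smoothNumbers
    simp only [Finset.mem_Icc, Finset.mem_union, Nat.smoothNumbersUpTo, Nat.roughNumbersUpTo,
      Finset.mem_filter, Finset.mem_range]
    grind
  rw [squarefreeHarmonic, hunion, Finset.filter_union,
    Finset.sum_union (Finset.disjoint_filter_filter hdisjoint), smoothSquarefreeHarmonic]

lemma sum_squarefree_filter_dvd {N p : ℕ} (hp : p.Prime) (hNp : N < p ^ 2) :
    ∑ n ∈ Finset.Icc 1 N with p ∣ n, (if Squarefree n then (n : ℝ)⁻¹ else 0) =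
      (p : ℝ)⁻¹ * squarefreeHarmonic (N / p) := by
  rw [sum_Icc_filter_dvd hp.pos, squarefreeHarmonic, Finset.sum_filter, Finset.mul_sum]
  refine Finset.sum_congr rfl fun k hk ↦ ?_
  rw [Finset.mem_Icc] at hk
  have hkp : k < p := hk.2.trans_lt (Nat.div_lt_of_lt_mul (by rwa [← sq]))
  have hcoprime : p.Coprime k := Nat.coprime_of_lt_prime (by lia) hkp hp
  simp [Nat.squarefree_mul hcoprime, hp.prime.squarefree, mul_comm]

lemma sum_squarefree_roughNumbersUpTo {N k : ℕ} (hNk : N < k ^ 2) :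
    ∑ n ∈ Nat.roughNumbersUpTo N k with Squarefree n, (n : ℝ)⁻¹ =
      ∑ p ∈ Nat.primesLE N \ Nat.primesBelow k, (p : ℝ)⁻¹ * squarefreeHarmonic (N / p) := by
  have hle {p : ℕ} (hp : p ∈ Nat.primesLE N \ Nat.primesBelow k) : p.Prime ∧ k ≤ p := by
    simp only [Finset.mem_sdiff, Nat.mem_primesLE, Nat.mem_primesBelow] at hp
    exact ⟨hp.1.2, not_lt.1 fun hlt ↦ hp.2 ⟨hlt, hp.1.2⟩⟩
  have hdisjoint : (↑(Nat.primesLE N \ Nat.primesBelow k) : Set ℕ).PairwiseDisjoint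
      fun p ↦ {n ∈ Finset.range (N + 1) | n ≠ 0 ∧ p ∣ n} := by
    refine fun p hp q hq hpq ↦ Finset.disjoint_filter.2 fun n hn hpn hqn ↦ hNk.not_ge ?_
    obtain ⟨hp, hkp⟩ := hle hp
    obtain ⟨hq, hkq⟩ := hle hq
    calc k ^ 2 ≤ p * q := sq k ▸ Nat.mul_le_mul hkp hkq
      _ ≤ n := Nat.le_of_dvd (Nat.pos_of_ne_zero hpn.1)
        (((Nat.coprime_primes hp hq).2 hpq).mul_dvd_of_dvd_of_dvd hpn.2 hqn.2)
      _ ≤ N := Finset.mem_range_succ_iff.1 hn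
  rw [Finset.sum_filter, Nat.roughNumbersUpTo_eq_biUnion, ← Nat.primesLE,
    Finset.sum_biUnion hdisjoint]
  refine Finset.sum_congr rfl fun p hp ↦ ?_
  rw [← sum_squarefree_filter_dvd (hle hp).1 (hNk.trans_le (Nat.pow_le_pow_left (hle hp).2 2))]
  refine Finset.sum_congr ?_ fun _ _ ↦ rfl
  ext n
  simp only [Finset.mem_filter, Finset.mem_range, Finset.mem_Icc]
  lia

theorem smoothSquarefreeHarmonic_eq_sub_sum {N k : ℕ} (hNk : N < k ^ 2) :
    smoothSquarefreeHarmonic N k = squarefreeHarmonic N -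
      ∑ p ∈ Nat.primesLE N \ Nat.primesBelow k, (p : ℝ)⁻¹ * squarefreeHarmonic (N / p) := by
  rw [squarefreeHarmonic_eq_smooth_add_rough N k, sum_squarefree_roughNumbersUpTo hNk,
    add_sub_cancel_right]

/-! ### Primes between `x` and `x ^ 2` -/

lemma tendsto_div_of_abs_sub_le {α : Type*} {l : Filter α} {f g h : α → ℝ} {B c : ℝ}
    (hg : Tendsto g l atTop) (hB : ∀ᶠ x in l, |f x - h x| ≤ B)
    (hh : Tendsto (fun x ↦ h x / g x) l (𝓝 c)) : Tendsto (fun x ↦ f x / g x) l (𝓝 c) := by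
  have hdiff : Tendsto (fun x ↦ (f x - h x) / g x) l (𝓝 0) := by
    refine squeeze_zero_norm' ?_ (hg.const_div_atTop B)
    filter_upwards [hB, hg.eventually_gt_atTop 0] with x hx hgx
    rw [norm_div, Real.norm_of_nonneg hgx.le]
    exact div_le_div_of_nonneg_right hx hgx.le
  simpa [← add_div] using hdiff.add hh

lemma sum_primesLE_sq_sdiff_primesLE (f : ℕ → ℝ) (x : ℕ) :
    ∑ p ∈ Nat.primesLE (x ^ 2) \ Nat.primesLE x, f p =
      ∑ p ∈ Nat.primesLE (x ^ 2), f p - ∑ p ∈ Nat.primesLE x, f p :=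
  Finset.sum_sdiff_eq_sub (Nat.primesLE_mono (Nat.le_self_pow two_ne_zero x))

lemma tendsto_sum_primesLE_sq_sdiff_inv :
    Tendsto (fun x : ℕ ↦ ∑ p ∈ Nat.primesLE (x ^ 2) \ Nat.primesLE x, (p : ℝ)⁻¹) atTop
      (𝓝 (log 2)) := by
  have hmertens := tendsto_sum_primesLE_inv_sub_log_log
  have hdiff := ((hmertens.comp (tendsto_pow_atTop two_ne_zero)).sub hmertens).add_const (log 2)
  rw [sub_self, zero_add] at hdiff
  refine hdiff.congr' ?_
  filter_upwards [eventually_gt_atTop 1] with x hx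
  have hlog : log x ≠ 0 := (Real.log_pos (mod_cast hx)).ne'
  have hloglog : log (log (x ^ 2 : ℕ)) = log 2 + log (log x) := by
    rw [Nat.cast_pow, Real.log_pow, Nat.cast_two, Real.log_mul two_ne_zero hlog]
  rw [sum_primesLE_sq_sdiff_primesLE, Function.comp_apply, hloglog]
  ring

lemma tendsto_sum_primesLE_sq_sdiff_log_div_div_log :
    Tendsto (fun x : ℕ ↦ (∑ p ∈ Nat.primesLE (x ^ 2) \ Nat.primesLE x, log p / p) / log x) atTop
      (𝓝 1) := by
  obtain ⟨K, hK⟩ := exists_abs_sum_primesLE_log_div_sub_log_le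
  refine tendsto_div_of_abs_sub_le (h := fun x : ℕ ↦ log x) (B := K + K)
    tendsto_log_natCast_atTop ?_ (tendsto_const_nhds.congr' ?_)
  · filter_upwards [eventually_ge_atTop 1] with x hx
    have hsq := hK (x ^ 2) (Nat.one_le_pow _ _ hx)
    rw [Nat.cast_pow, Real.log_pow, Nat.cast_two] at hsq
    rw [sum_primesLE_sq_sdiff_primesLE]
    refine le_trans (le_of_eq ?_) ((abs_sub _ _).trans (add_le_add hsq (hK x hx)))
    congr 1
    ring
  · filter_upwards [eventually_gt_atTop 1] with x hx
    exact (div_self (Real.log_pos (mod_cast hx)).ne').symm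

lemma abs_log_natDiv_sub_le {N p : ℕ} (hp : 0 < p) (hpN : p ≤ N) :
    |log (N / p : ℕ) - (log N - log p)| ≤ log 2 := by
  have hq : 1 ≤ N / p := Nat.div_pos hpN hp
  have hlower : N / p * p ≤ N := Nat.div_mul_le_self N p
  have hupper : N ≤ 2 * (N / p * p) := by
    nlinarith [Nat.lt_mul_of_div_lt (Nat.lt_succ_self (N / p)) hp]
  have hq0 : (0 : ℝ) < (N / p : ℕ) := mod_cast hq
  have hp0 : (0 : ℝ) < p := mod_cast hp
  have hlog_lower : log (N / p : ℕ) + log p ≤ log N := by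
    rw [← Real.log_mul hq0.ne' hp0.ne']
    exact Real.log_le_log (by positivity) (mod_cast hlower)
  have hlog_upper : log N ≤ log 2 + (log (N / p : ℕ) + log p) := by
    rw [← Real.log_mul hq0.ne' hp0.ne', ← Real.log_mul two_ne_zero (by positivity)]
    exact Real.log_le_log (mod_cast hp.trans_le hpN) (mod_cast hupper)
  rw [abs_le]
  constructor <;> linarith [Real.log_nonneg one_le_two]

lemma exists_abs_sum_inv_mul_squarefreeHarmonic_div_sub_le :
    ∃ K, ∀ (N : ℕ) (s : Finset ℕ), (∀ p ∈ s, 0 < p ∧ p ≤ N) →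
      |∑ p ∈ s, (p : ℝ)⁻¹ * squarefreeHarmonic (N / p) -
        6 / Real.pi ^ 2 * (log N * ∑ p ∈ s, (p : ℝ)⁻¹ - ∑ p ∈ s, log p / p)| ≤
      K * ∑ p ∈ s, (p : ℝ)⁻¹ := by
  obtain ⟨K, hK⟩ := exists_abs_squarefreeHarmonic_sub_log_le
  refine ⟨K + 6 / Real.pi ^ 2 * log 2, fun N s hs ↦ ?_⟩
  rw [Finset.mul_sum, ← Finset.sum_sub_distrib, Finset.mul_sum, ← Finset.sum_sub_distrib,
    Finset.mul_sum]
  refine (Finset.abs_sum_le_sum_abs _ _).trans (Finset.sum_le_sum fun p hp ↦ ?_)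
  obtain ⟨hp0, hpN⟩ := hs p hp
  calc |(p : ℝ)⁻¹ * squarefreeHarmonic (N / p) -
        6 / Real.pi ^ 2 * (log N * (p : ℝ)⁻¹ - log p / p)|
    _ = |(p : ℝ)⁻¹ * ((squarefreeHarmonic (N / p) - 6 / Real.pi ^ 2 * log (N / p : ℕ)) +
          6 / Real.pi ^ 2 * (log (N / p : ℕ) - (log N - log p)))| := by
        congr 1
        ring
    _ ≤ (p : ℝ)⁻¹ * (K + 6 / Real.pi ^ 2 * log 2) := by
        rw [abs_mul, abs_of_nonneg (a := (p : ℝ)⁻¹) (by positivity)]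
        gcongr
        refine (abs_add_le _ _).trans (add_le_add (hK _ (Nat.div_pos hpN hp0)) ?_)
        rw [abs_mul, abs_of_nonneg (a := 6 / Real.pi ^ 2) (by positivity)]
        gcongr
        exact abs_log_natDiv_sub_le hp0 hpN
    _ = (K + 6 / Real.pi ^ 2 * log 2) * (p : ℝ)⁻¹ := mul_comm _ _

lemma tendsto_squarefreeHarmonic_sq_div_log :
    Tendsto (fun x : ℕ ↦ squarefreeHarmonic (x ^ 2) / log x) atTop
      (𝓝 (6 / Real.pi ^ 2 * 2)) := by
  obtain ⟨K, hK⟩ := exists_abs_squarefreeHarmonic_sub_log_le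
  refine tendsto_div_of_abs_sub_le (h := fun x : ℕ ↦ 6 / Real.pi ^ 2 * (2 * log x)) (B := K)
    tendsto_log_natCast_atTop ?_ (tendsto_const_nhds.congr' ?_)
  · filter_upwards [eventually_ge_atTop 1] with x hx
    simpa using hK (x ^ 2) (Nat.one_le_pow _ _ hx)
  · filter_upwards [eventually_gt_atTop 1] with x hx
    have hlog : log x ≠ 0 := (Real.log_pos (mod_cast hx)).ne'
    field_simp

lemma tendsto_sum_primesLE_sq_sdiff_inv_mul_squarefreeHarmonic_div_log :
    Tendsto (fun x : ℕ ↦ (∑ p ∈ Nat.primesLE (x ^ 2) \ Nat.primesLE x,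
        (p : ℝ)⁻¹ * squarefreeHarmonic (x ^ 2 / p)) / log x) atTop
      (𝓝 (6 / Real.pi ^ 2 * (2 * log 2 - 1))) := by
  obtain ⟨K, hK⟩ := exists_abs_sum_inv_mul_squarefreeHarmonic_div_sub_le
  have hinv := tendsto_sum_primesLE_sq_sdiff_inv
  refine tendsto_div_of_abs_sub_le tendsto_log_natCast_atTop (B := K * log 2 + 1)
    (h := fun x : ℕ ↦ 6 / Real.pi ^ 2 *
      (log (x ^ 2 : ℕ) * ∑ p ∈ Nat.primesLE (x ^ 2) \ Nat.primesLE x, (p : ℝ)⁻¹ -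
        ∑ p ∈ Nat.primesLE (x ^ 2) \ Nat.primesLE x, log p / p)) ?_ ?_
  · filter_upwards [(hinv.const_mul K).eventually_le_const (lt_add_one _)] with x hx
    refine (hK (x ^ 2) _ fun p hp ↦ ?_).trans hx
    have hp' := (Finset.mem_sdiff.1 hp).1
    exact ⟨(Nat.prime_of_mem_primesLE hp').pos, Nat.le_of_mem_primesLE hp'⟩
  · refine (((hinv.const_mul 2).sub tendsto_sum_primesLE_sq_sdiff_log_div_div_log).const_mul
      _).congr' ?_
    filter_upwards [eventually_gt_atTop 1] with x hx
    have hlog : log x ≠ 0 := (Real.log_pos (mod_cast hx)).ne'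
    rw [Nat.cast_pow, Real.log_pow, Nat.cast_two]
    field_simp

theorem tendsto_smoothSquarefreeHarmonic_sq_div_log :
    Tendsto (fun x : ℕ ↦ smoothSquarefreeHarmonic (x ^ 2) (x + 1) / log x) atTop
      (𝓝 (6 / Real.pi ^ 2 * (3 - log 4))) := by
  have hlim := tendsto_squarefreeHarmonic_sq_div_log.sub
    tendsto_sum_primesLE_sq_sdiff_inv_mul_squarefreeHarmonic_div_log
  have hlog_four : log 4 = 2 * log 2 := by
    rw [show (4 : ℝ) = 2 ^ 2 by norm_num, Real.log_pow, Nat.cast_two]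
  rw [← mul_sub, show 2 - (2 * log 2 - 1) = 3 - log 4 by rw [hlog_four]; ring] at hlim
  refine hlim.congr fun x ↦ ?_
  rw [smoothSquarefreeHarmonic_eq_sub_sum (Nat.pow_lt_pow_left x.lt_succ_self two_ne_zero), sub_div,
    ← Nat.primesLE]

/-! ### The elements of `Ω_m` -/

lemma prime_nthPrime (j : ℕ) : (nthPrime j).Prime := Nat.prime_nth_prime j

lemma nthPrime_strictMono : StrictMono nthPrime := Nat.nth_strictMono Nat.infinite_setOfPred_prime

lemma image_nthPrime_range_succ (m : ℕ) :
    (Finset.range (m + 1)).image nthPrime = Nat.primesLE (nthPrime m) := by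
  ext p
  simp only [Finset.mem_image, Finset.mem_range_succ_iff, Nat.mem_primesLE]
  constructor
  · rintro ⟨j, hj, rfl⟩
    exact ⟨nthPrime_strictMono.monotone hj, prime_nthPrime j⟩
  · rintro ⟨hle, hp⟩
    have hcount : nthPrime (Nat.count Nat.Prime p) = p := Nat.nth_count hp
    exact ⟨_, nthPrime_strictMono.le_iff_le.1 (hcount.trans_le hle), hcount⟩

lemma Zm_succ_eq_prod_primesLE (m : ℕ) :
    Zm (m + 1) = ∏ p ∈ Nat.primesLE (nthPrime m), (1 + (p : ℝ)⁻¹) := by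
  rw [← image_nthPrime_range_succ, Finset.prod_image nthPrime_strictMono.injective.injOn, Zm]
  simp only [one_div]

lemma elt_eq_prod_filter {m : ℕ} (ν : Fin m → Bool) :
    elt m ν = ∏ j : Fin m with ν j, nthPrime j := by
  rw [elt, Finset.prod_filter]

lemma prime_dvd_elt_iff {m q : ℕ} (hq : q.Prime) (ν : Fin m → Bool) :
    q ∣ elt m ν ↔ ∃ j : Fin m, ν j ∧ q = nthPrime j := by
  simp [elt_eq_prod_filter, hq.prime.dvd_finsetProd_iff,
    Nat.prime_dvd_prime_iff_eq hq (prime_nthPrime _)]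

lemma nthPrime_dvd_elt_iff {m : ℕ} (ν : Fin m → Bool) (j : Fin m) :
    nthPrime j ∣ elt m ν ↔ ν j := by
  simp [prime_dvd_elt_iff (prime_nthPrime j), nthPrime_strictMono.injective.eq_iff,
    Fin.val_inj]

lemma elt_injective (m : ℕ) : Function.Injective (elt m) := fun ν ν' h ↦ by
  ext j
  rw [Bool.eq_iff_iff, ← nthPrime_dvd_elt_iff, h, nthPrime_dvd_elt_iff]

lemma squarefree_elt {m : ℕ} (ν : Fin m → Bool) : Squarefree (elt m ν) := by
  rw [elt_eq_prod_filter]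
  refine Finset.squarefree_prod_of_pairwise_isCoprime (fun i _ j _ hij ↦ ?_) fun j _ ↦
    (prime_nthPrime j).prime.squarefree
  exact Nat.coprime_iff_isRelPrime.1 ((Nat.coprime_primes (prime_nthPrime _) (prime_nthPrime _)).2
    fun h ↦ hij (Fin.ext (nthPrime_strictMono.injective h)))

lemma elt_mem_smoothNumbers {m : ℕ} (ν : Fin (m + 1) → Bool) :
    elt (m + 1) ν ∈ (nthPrime m + 1).smoothNumbers := by
  refine Nat.mem_smoothNumbers'.2 fun p hp hdvd ↦ ?_
  obtain ⟨j, -, rfl⟩ := (prime_dvd_elt_iff hp ν).1 hdvd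
  exact Nat.lt_succ_of_le (nthPrime_strictMono.monotone (Nat.le_of_lt_succ j.2))

lemma elt_decide_dvd_of_squarefree {m n : ℕ} (hn : Squarefree n)
    (hsmooth : n ∈ (nthPrime m + 1).smoothNumbers) :
    elt (m + 1) (fun j ↦ decide (nthPrime j ∣ n)) = n := by
  refine (Nat.Squarefree.ext_iff (squarefree_elt _) hn).2 fun p hp ↦ ?_
  rw [prime_dvd_elt_iff hp]
  constructor
  · rintro ⟨j, hj, rfl⟩
    exact of_decide_eq_true hj
  · intro hdvd
    have hple : p ≤ nthPrime m := Nat.le_of_lt_succ (Nat.mem_smoothNumbers'.1 hsmooth p hp hdvd)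
    have hmem := Nat.mem_primesLE.2 ⟨hple, hp⟩
    rw [← image_nthPrime_range_succ] at hmem
    obtain ⟨j, hj, rfl⟩ := Finset.mem_image.1 hmem
    exact ⟨⟨j, Finset.mem_range.1 hj⟩, decide_eq_true hdvd, rfl⟩

lemma sum_inv_elt_eq_smoothSquarefreeHarmonic (m N : ℕ) :
    ∑ ν : Fin (m + 1) → Bool with elt (m + 1) ν ≤ N, (elt (m + 1) ν : ℝ)⁻¹ =
      smoothSquarefreeHarmonic N (nthPrime m + 1) := by
  refine Finset.sum_nbij (elt (m + 1)) (fun ν hν ↦ ?_) (elt_injective _).injOn (fun n hn ↦ ?_)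
    fun _ _ ↦ rfl
  · exact Finset.mem_filter.2 ⟨Nat.mem_smoothNumbersUpTo.2
      ⟨(Finset.mem_filter.1 hν).2, elt_mem_smoothNumbers ν⟩, squarefree_elt ν⟩
  · obtain ⟨hn, hsquarefree⟩ := Finset.mem_filter.1 hn
    obtain ⟨hnN, hsmooth⟩ := Nat.mem_smoothNumbersUpTo.1 hn
    have helt := elt_decide_dvd_of_squarefree hsquarefree hsmooth
    exact ⟨_, Finset.mem_coe.2 (Finset.mem_filter.2 ⟨Finset.mem_univ _, helt.trans_le hnN⟩), helt⟩

lemma sum_mass_eq_div (m : ℕ) :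
    ∑ ν : Fin (m + 1) → Bool with (elt (m + 1) ν : ℝ) ≤ (nthPrime m : ℝ) ^ 2, mass (m + 1) ν =
      smoothSquarefreeHarmonic (nthPrime m ^ 2) (nthPrime m + 1) /
        ∏ p ∈ Nat.primesLE (nthPrime m), (1 + (p : ℝ)⁻¹) := by
  rw [← Zm_succ_eq_prod_primesLE, ← sum_inv_elt_eq_smoothSquarefreeHarmonic, Finset.sum_div]
  norm_cast
  refine Finset.sum_congr rfl fun ν _ ↦ ?_
  rw [mass, mul_comm, one_div, mul_inv, div_eq_mul_inv]

/-- `Π_m{ n ≤ p_m² } → e^{-γ}(3 - ln 4) ≈ 0.90603` as `m → ∞`. -/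
theorem mass_below_pm_squared :
    Tendsto (fun m : ℕ =>
        ∑ ν ∈ Finset.univ.filter
            (fun ν : Fin m → Bool => (elt m ν : ℝ) ≤ (nthPrime (m - 1) : ℝ) ^ 2),
          mass m ν)
      atTop (𝓝 (Real.exp (-Real.eulerMascheroniConstant) * (3 - Real.log 4))) := by
  have hlim := (tendsto_smoothSquarefreeHarmonic_sq_div_log.div
    tendsto_prod_primesLE_one_add_inv_div_log (by positivity)).comp
      nthPrime_strictMono.tendsto_atTop
  have hconst : 6 / Real.pi ^ 2 * (3 - log 4) /
      (exp Real.eulerMascheroniConstant * (6 / Real.pi ^ 2)) =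
        exp (-Real.eulerMascheroniConstant) * (3 - log 4) := by
    rw [Real.exp_neg]
    field_simp
  rw [hconst] at hlim
  refine (tendsto_add_atTop_iff_nat 1).1 (hlim.congr fun m ↦ ?_)
  have hlog : log (nthPrime m) ≠ 0 :=
    (Real.log_pos (mod_cast (prime_nthPrime m).one_lt)).ne'
  exact (div_div_div_cancel_right₀ hlog _ _).trans (sum_mass_eq_div m).symm

end
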